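/- arXiv:1604.05023 — 3 statements merged into one kernel-verified Lean document; each statement's English description precedes it below -/
import Mathlib

section
/- Let G be a port-numbered graph, let r ≥ 0 be an integer, and suppose that two distinct nodes v and w of G satisfy B^r(v) = B^r(w). Then for every function f defined on augmented truncated views at depth r, the assignment u ↦ f(B^r(u)) is not a leader election output for G. In particular, no deterministic distributed algorithm running in at most r rounds can elect a leader in G, regardless of the information given identically to all nodes. -/
namespace Election

/-- A port-numbered graph: a simple undirected connected graph on `n ≥ 3` unlabeled nodes
(vertex set `Fin n`) in which, at each node `v` of degree `d`, the edges incident to `v`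
carry distinct port numbers `0, …, d-1` at `v`. `portNum v u` is the port number at `v`
of the edge `{v, u}` (meaningful only when `v` and `u` are adjacent). -/
structure PortGraph where
  n : ℕ
  three_le : 3 ≤ n
  G : SimpleGraph (Fin n)
  conn : G.Connected
  portNum : Fin n → Fin n → ℕ
  port_lt : ∀ v u : Fin n, G.Adj v u → portNum v u < Nat.card {w : Fin n // G.Adj v w}
  port_inj : ∀ v u w : Fin n, G.Adj v u → G.Adj v w → portNum v u = portNum v w → u = w

namespace PortGraph

/-- The degree of a node. -/
noncomputable def degree (PG : PortGraph) (v : Fin PG.n) : ℕ :=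
  Nat.card {w : Fin PG.n // PG.G.Adj v w}

open Classical in
/-- The neighbor of `v` reached through port `p` (junk value `v` if there is none). -/
noncomputable def nbr (PG : PortGraph) (v : Fin PG.n) (p : ℕ) : Fin PG.n :=
  if h : ∃ u : Fin PG.n, PG.G.Adj v u ∧ PG.portNum v u = p then h.choose else v

/-- Abstract (augmented truncated) views: a view at depth `0` is a leaf carrying a degree;
a view at depth `ℓ+1` is a node whose children are listed in the order of the port numbers
`0, …, d-1` at the root, each child carrying the port number at the other endpoint of the
corresponding edge together with the subview at depth `ℓ`. -/
inductive AugView : Type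
  | leaf (deg : ℕ) : AugView
  | node (children : List (ℕ × AugView)) : AugView

/-- The augmented truncated view `B^ℓ(v)` of node `v` at depth `ℓ`. -/
noncomputable def augView (PG : PortGraph) : ℕ → Fin PG.n → AugView
  | 0, v => AugView.leaf (PG.degree v)
  | (ℓ + 1), v => AugView.node ((List.range (PG.degree v)).map
      fun p => (PG.portNum (PG.nbr v p) v, PG.augView ℓ (PG.nbr v p)))

/-- `IsPath PG v s vs` means: the sequence `s = (p₁, q₁, …, p_k, q_k)` of port numbers codes
a path in `PG` starting at `v` whose i-th edge carries port `p_i` at the endpoint closer to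
`v` and `q_i` at the other endpoint, and `vs` is the list of visited vertices (from `v` on). -/
inductive IsPath (PG : PortGraph) : Fin PG.n → List ℕ → List (Fin PG.n) → Prop
  | nil (v : Fin PG.n) : IsPath PG v [] [v]
  | cons (v u : Fin PG.n) (p q : ℕ) (rest : List ℕ) (vs : List (Fin PG.n))
      (hadj : PG.G.Adj v u) (hp : PG.portNum v u = p) (hq : PG.portNum u v = q)
      (htail : IsPath PG u rest vs) : IsPath PG v (p :: q :: rest) (v :: vs)

/-- `P` is a leader election output for `PG`: every node `v` outputs a sequence of port
numbers coding a simple path starting at `v`, and all these paths end at a common node. -/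
def IsLeaderElection (PG : PortGraph) (P : Fin PG.n → List ℕ) : Prop :=
  ∃ leader : Fin PG.n, ∀ v : Fin PG.n, ∃ vs : List (Fin PG.n),
    PG.IsPath v (P v) vs ∧ vs.Nodup ∧ vs.getLast? = some leader

/-- A graph is feasible if at some depth all augmented truncated views are pairwise distinct. -/
def Feasible (PG : PortGraph) : Prop :=
  ∃ ℓ : ℕ, Function.Injective (PG.augView ℓ)

/-- The election index: the smallest depth at which all augmented truncated views are distinct. -/
noncomputable def electionIndex (PG : PortGraph) : ℕ :=
  sInf {ℓ : ℕ | Function.Injective (PG.augView ℓ)}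

/-- The diameter: the maximum distance between two nodes. -/
noncomputable def diam (PG : PortGraph) : ℕ :=
  sSup (Set.range fun p : Fin PG.n × Fin PG.n => PG.G.dist p.1 p.2)

end PortGraph


/-- A port sequence is followed backwards deterministically: two paths with the same
code and the same last node start at the same node. -/
theorem PortGraph.IsPath.start_eq_of_getLast?_eq {PG : PortGraph} {v w : Fin PG.n} {s : List ℕ}
    {vs ws : List (Fin PG.n)} (hv : PG.IsPath v s vs) (hw : PG.IsPath w s ws)
    (hlast : vs.getLast? = ws.getLast?) : v = w := by
  induction hv generalizing w ws with
  | nil v =>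
    cases hw
    simpa using hlast
  | cons v u p q rest vs hadj hp hq htail ih =>
    cases hw with
    | cons _ u' _ _ _ ws hadj' hp' hq' htail' =>
      have hvs : vs ≠ [] := by cases htail <;> simp
      have hws : ws ≠ [] := by cases htail' <;> simp
      obtain rfl : u = u' := ih htail' (by
        rwa [List.getLast?_cons_of_ne_nil hvs, List.getLast?_cons_of_ne_nil hws] at hlast)
      exact PG.port_inj u v w hadj.symm hadj'.symm (hq.trans hq'.symm)

/-- If two distinct nodes have equal augmented truncated views at depth `r`, then no
assignment of the form `u ↦ f (B^r(u))` is a leader election output for `G`. -/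
theorem election_impossible_of_equal_views (PG : PortGraph) (r : ℕ)
    (v w : Fin PG.n) (hvw : v ≠ w) (hview : PG.augView r v = PG.augView r w) :
    ∀ f : PortGraph.AugView → List ℕ,
      ¬ PG.IsLeaderElection (fun u => f (PG.augView r u)) := by
  rintro f ⟨leader, hlead⟩
  obtain ⟨vs, hvs, -, hvs_last⟩ := hlead v
  obtain ⟨ws, hws, -, hws_last⟩ := hlead w
  simp only [← hview] at hws
  exact hvw (hvs.start_eq_of_getLast?_eq hws (hvs_last.trans hws_last.symm))

end Election
end

section
/- There exist a constant C > 0, an oracle A assigning to every feasible port-numbered graph a binary advice string, and a function f defined on pairs (binary string, augmented truncated view), such that for every feasible port-numbered graph G with n nodes and election index φ: the advice length |A(G)| is at most C·n·log n, and the assignment v ↦ f(A(G), B^φ(v)) is a leader election output for G. In other words, advice of size O(n log n) suffices to perform leader election in time equal to the election index. -/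
namespace Election

namespace PortGraph

theorem exists_portNum_eq (PG : PortGraph) (v : Fin PG.n) {p : ℕ} (hp : p < PG.degree v) :
    ∃ u, PG.G.Adj v u ∧ PG.portNum v u = p := by
  have hinj : Function.Injective (fun u : {w : Fin PG.n // PG.G.Adj v w} =>
      (⟨PG.portNum v u, PG.port_lt v u u.2⟩ : Fin (PG.degree v))) := by
    intro a b hab
    exact Subtype.ext (PG.port_inj v a b a.2 b.2 (congrArg Fin.val hab))
  have hbij := (Nat.bijective_iff_injective_and_card _).2 ⟨hinj, by simp [degree]⟩
  obtain ⟨u, hu⟩ := hbij.2 ⟨p, hp⟩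
  exact ⟨u, u.2, congrArg Fin.val hu⟩

theorem nbr_spec (PG : PortGraph) (v : Fin PG.n) {p : ℕ} (hp : p < PG.degree v) :
    PG.G.Adj v (PG.nbr v p) ∧ PG.portNum v (PG.nbr v p) = p := by
  have h := PG.exists_portNum_eq v hp
  rw [nbr, dif_pos h]
  exact h.choose_spec

theorem portNum_lt (PG : PortGraph) {v u : Fin PG.n} (h : PG.G.Adj v u) :
    PG.portNum v u < PG.n :=
  (PG.port_lt v u h).trans_le
    ((Nat.card_le_card_of_injective _ Subtype.val_injective).trans (by simp))

/-- The views of a graph do not depend on the port numbers of non-adjacent pairs. -/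
theorem augView_congr {n : ℕ} {h h' : 3 ≤ n} {G : SimpleGraph (Fin n)} {c c' : G.Connected}
    {p p' : Fin n → Fin n → ℕ} {l l' i i'} (hp : ∀ v u, G.Adj v u → p v u = p' v u) (ℓ : ℕ) :
    augView ⟨n, h, G, c, p, l, i⟩ ℓ = augView ⟨n, h', G, c', p', l', i'⟩ ℓ := by
  induction ℓ with
  | zero => rfl
  | succ ℓ ih =>
    funext v
    simp only [augView]
    congr 1
    refine List.map_congr_left fun k hk => ?_
    have hk := List.mem_range.1 hk
    have h₁ := nbr_spec ⟨n, h, G, c, p, l, i⟩ v hk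
    have h₂ := nbr_spec ⟨n, h', G, c', p', l', i'⟩ v hk
    have e : nbr ⟨n, h, G, c, p, l, i⟩ v k = nbr ⟨n, h', G, c', p', l', i'⟩ v k :=
      i v _ _ h₁.1 h₂.1 (h₁.2.trans (h₂.2.symm.trans (hp _ _ h₂.1).symm))
    rw [ih, e]
    exact congrArg (fun x => (x, _)) (hp _ _ h₂.1.symm)

open Classical in
/-- The adjacency matrix of a port-numbered graph, with each edge marked by its port number
increased by one. -/
noncomputable def portMatrix (PG : PortGraph) (v u : Fin PG.n) : Fin (PG.n + 1) :=
  if h : PG.G.Adj v u then ⟨PG.portNum v u + 1, Nat.succ_lt_succ (PG.portNum_lt h)⟩ else 0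

/-- Matrices over `{0, …, n}` with a distinguished index. -/
abbrev RootedMatrix (n : ℕ) : Type := Fin n × (Fin n → Fin n → Fin (n + 1))

theorem augView_electionIndex_congr (x y : Σ PG : PortGraph, Fin PG.n)
    (h : (⟨x.1.n, x.2, x.1.portMatrix⟩ : Σ n, RootedMatrix n) = ⟨y.1.n, y.2, y.1.portMatrix⟩) :
    x.1.augView x.1.electionIndex x.2 = y.1.augView y.1.electionIndex y.2 := by
  obtain ⟨⟨n, hn, G, c, p, l, i⟩, v⟩ := x
  obtain ⟨⟨n', hn', G', c', p', l', i'⟩, v'⟩ := y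
  dsimp only at h v v'
  obtain ⟨h1, h2⟩ := Sigma.mk.inj h
  subst h1
  obtain ⟨h3, h4⟩ := Prod.mk.inj (eq_of_heq h2)
  subst h3
  have key : ∀ a b, (G.Adj a b ↔ G'.Adj a b) ∧ (G.Adj a b → p a b = p' a b) := by
    intro a b
    have := congrFun (congrFun h4 a) b
    simp only [portMatrix] at this
    split_ifs at this with h5 h6 h6
    · simp only [Fin.mk.injEq, add_left_inj] at this
      exact ⟨by simp [h5, h6], fun _ => this⟩
    · simp [Fin.ext_iff] at this
    · simp [Fin.ext_iff] at this
    · simp [h5, h6]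
  obtain rfl : G = G' := by
    ext a b
    exact (key a b).1
  have hv := augView_congr (h := hn) (h' := hn') (c := c) (c' := c') (l := l) (l' := l')
    (i := i) (i' := i') fun a b => (key a b).2
  simp only [electionIndex, hv]

/-- A function recovering views at the depth of the election index from rooted port matrices. -/
theorem exists_view_of_rootedMatrix : ∃ g : (Σ n, RootedMatrix n) → AugView,
    ∀ (PG : PortGraph) (v : Fin PG.n),
      g ⟨PG.n, v, PG.portMatrix⟩ = PG.augView PG.electionIndex v := by
  let view : (Σ PG : PortGraph, Fin PG.n) → AugView := fun x => x.1.augView x.1.electionIndex x.2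
  let code : (Σ PG : PortGraph, Fin PG.n) → Σ n, RootedMatrix n :=
    fun x => ⟨x.1.n, x.2, x.1.portMatrix⟩
  have hf : view.FactorsThrough code := fun x y h => augView_electionIndex_congr x y h
  exact ⟨Function.extend code view fun _ => AugView.leaf 0,
    fun PG v => hf.extend_apply _ ⟨PG, v⟩⟩

end PortGraph

open Polynomial in
/-- Finitely many distinct polynomials of small degree are separated by evaluation at a point. -/
theorem exists_injective_eval {K : Type*} [Field K] [Fintype K] {n L : ℕ} (s : Fin n → K[X])
    (hs : Function.Injective s) (hdeg : ∀ i, (s i).natDegree ≤ L)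
    (hcard : n ^ 2 * L < Fintype.card K) :
    ∃ a : K, Function.Injective fun i => (s i).eval a := by
  classical
  let P : K[X] := ∏ x ∈ (Finset.univ : Finset (Fin n × Fin n)) with x.1 ≠ x.2, (s x.1 - s x.2)
  have hP : P ≠ 0 := Finset.prod_ne_zero_iff.2 fun x hx =>
    sub_ne_zero.2 fun h => (Finset.mem_filter.1 hx).2 (hs h)
  have hPdeg : P.natDegree ≤ n ^ 2 * L := by
    refine (natDegree_prod_le _ _).trans ?_
    refine (Finset.sum_le_card_nsmul _ _ L fun x _ => ?_).trans ?_
    · exact (natDegree_sub_le _ _).trans (max_le (hdeg _) (hdeg _))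
    · rw [smul_eq_mul]
      refine Nat.mul_le_mul_right _ ((Finset.card_le_univ _).trans ?_)
      simp [sq]
  obtain ⟨a, ha⟩ := exists_eval_ne_zero_of_natDegree_lt_card P hP
    (by rw [Cardinal.mk_fintype]; exact_mod_cast hPdeg.trans_lt hcard)
  refine ⟨a, fun i j hij => by_contra fun hne => ha ?_⟩
  rw [eval_prod]
  exact Finset.prod_eq_zero (i := (i, j)) (by simpa using hne) (by simpa [sub_eq_zero] using hij)

open Polynomial in
/-- A small family of hash functions such that any `n` distinct elements of the range of `g`
are separated by some member of the family. -/
theorem exists_separating_family {V : Type*} {n : ℕ} (hn : 3 ≤ n)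
    (g : PortGraph.RootedMatrix n → V) :
    ∃ H : Fin (n ^ 6) → V → Fin (n ^ 6), ∀ s : Fin n → V, Function.Injective s →
      (∀ i, s i ∈ Set.range g) → ∃ a, Function.Injective fun i => H a (s i) := by
  obtain ⟨q, hq, hlt, hle⟩ := Nat.exists_prime_lt_and_le_two_mul (n ^ 2 * (n ^ 2 + 1))
    (by positivity)
  have : Fact q.Prime := ⟨hq⟩
  have hq6 : q ≤ n ^ 6 := by nlinarith [pow_le_pow_left₀ (by norm_num) hn 2, sq_nonneg (n ^ 2)]
  have hnq : n + 1 ≤ q := by nlinarith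
  obtain ⟨ι⟩ : Nonempty (PortGraph.RootedMatrix n ↪ (Fin (n ^ 2 + 1) → ZMod q)) := by
    apply Function.Embedding.nonempty_of_card_le
    simp only [PortGraph.RootedMatrix, Fintype.card_prod, Fintype.card_pi, Fintype.card_fin,
      ZMod.card, Finset.prod_const, Finset.card_univ]
    calc n * ((n + 1) ^ n) ^ n ≤ q * (q ^ n) ^ n := by gcongr; omega
      _ = q ^ (n ^ 2 + 1) := by ring
  let poly : PortGraph.RootedMatrix n → (ZMod q)[X] :=
    fun d => ((degreeLTEquiv (ZMod q) (n ^ 2 + 1)).symm (ι d) : (ZMod q)[X])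
  have hpoly : Function.Injective poly :=
    Subtype.val_injective.comp ((LinearEquiv.injective _).comp ι.injective)
  have hdeg : ∀ d, (poly d).natDegree ≤ n ^ 2 + 1 := fun d =>
    natDegree_le_of_degree_le (mem_degreeLT.1
      ((degreeLTEquiv (ZMod q) (n ^ 2 + 1)).symm (ι d)).2).le
  have : 0 < n := by omega
  have : Nonempty (PortGraph.RootedMatrix n) := ⟨(⟨0, this⟩, fun _ _ => 0)⟩
  obtain ⟨j⟩ : Nonempty (ZMod q ↪ Fin (n ^ 6)) :=
    Function.Embedding.nonempty_of_card_le (by simpa [ZMod.card] using hq6)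
  refine ⟨fun a B => j ((poly (Function.invFun g B)).eval (Function.invFun j a)),
    fun s hs hr => ?_⟩
  have hinv : ∀ i, g (Function.invFun g (s i)) = s i := fun i => Function.invFun_eq (hr i)
  obtain ⟨a, ha⟩ := exists_injective_eval (fun i => poly (Function.invFun g (s i)))
    (fun x y hxy => hs (by rw [← hinv x, ← hinv y, hpoly hxy])) (fun i => hdeg _)
    (by rw [ZMod.card]; exact hlt)
  refine ⟨j a, ?_⟩
  simp only [Function.leftInverse_invFun j.injective a]
  exact j.injective.comp ha

/-- The advice for graphs with `n` nodes: the index of a hash function and, for every node,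
its hash value, the two port numbers of the edge to its parent in a tree, and its parent. -/
abbrev TreeAdvice (n : ℕ) : Type :=
  Fin (n ^ 6) × (Fin n → Fin (n ^ 6) × Fin n × Fin n × Fin n)

/-- The ports on the way from `i` to the root of the tree given by the table `T`, using at most
`k` edges. The root is its own parent. -/
def treePath {n : ℕ} (T : Fin n → Fin n × Fin n × Fin n) : ℕ → Fin n → List ℕ
  | 0, _ => []
  | k + 1, i => if (T i).2.2 = i then [] else
      (T i).1 :: (T i).2.1 :: treePath T k (T i).2.2

namespace PortGraph

theorem exists_adj_dist_lt (PG : PortGraph) {v r : Fin PG.n} (h : v ≠ r) :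
    ∃ u, PG.G.Adj v u ∧ PG.G.dist u r < PG.G.dist v r := by
  obtain ⟨w, hw⟩ := PG.conn.exists_walk_length_eq_dist v r
  cases w with
  | nil => exact absurd rfl h
  | cons hadj w =>
    refine ⟨_, hadj, ?_⟩
    have := SimpleGraph.dist_le w
    simp only [SimpleGraph.Walk.length_cons] at hw
    omega

/-- Every rooted port-numbered graph has a table describing a breadth-first tree. -/
theorem exists_treeTable (PG : PortGraph) (r : Fin PG.n) :
    ∃ T : Fin PG.n → Fin PG.n × Fin PG.n × Fin PG.n, (T r).2.2 = r ∧ ∀ v, v ≠ r →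
      PG.G.Adj v (T v).2.2 ∧ PG.G.dist (T v).2.2 r < PG.G.dist v r ∧
      PG.portNum v (T v).2.2 = (T v).1 ∧ PG.portNum (T v).2.2 v = (T v).2.1 := by
  have : ∀ v, ∃ t : Fin PG.n × Fin PG.n × Fin PG.n, (v = r → t.2.2 = r) ∧ (v ≠ r →
      PG.G.Adj v t.2.2 ∧ PG.G.dist t.2.2 r < PG.G.dist v r ∧
      PG.portNum v t.2.2 = t.1 ∧ PG.portNum t.2.2 v = t.2.1) := by
    intro v
    by_cases h : v = r
    · exact ⟨(r, r, r), by simp [h]⟩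
    · obtain ⟨u, hu, hd⟩ := PG.exists_adj_dist_lt h
      exact ⟨(⟨_, PG.portNum_lt hu⟩, ⟨_, PG.portNum_lt hu.symm⟩, u), by simp [h, hu, hd]⟩
  choose T hT using this
  exact ⟨T, (hT r).1 rfl, fun v hv => (hT v).2 hv⟩

theorem treePath_spec (PG : PortGraph) {r : Fin PG.n}
    {T : Fin PG.n → Fin PG.n × Fin PG.n × Fin PG.n} (hr : (T r).2.2 = r)
    (hT : ∀ v, v ≠ r →
      PG.G.Adj v (T v).2.2 ∧ PG.G.dist (T v).2.2 r < PG.G.dist v r ∧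
      PG.portNum v (T v).2.2 = (T v).1 ∧ PG.portNum (T v).2.2 v = (T v).2.1)
    (k : ℕ) (v : Fin PG.n) (hk : PG.G.dist v r ≤ k) :
    ∃ vs, PG.IsPath v (treePath T k v) vs ∧ vs.Nodup ∧ vs.getLast? = some r ∧
      ∀ w ∈ vs, PG.G.dist w r ≤ PG.G.dist v r := by
  induction k generalizing v with
  | zero =>
    obtain rfl : v = r := PG.conn.dist_eq_zero_iff.1 (Nat.le_zero.1 hk)
    exact ⟨[v], .nil v, by simp, by simp, by simp⟩
  | succ k ih =>
    by_cases h : v = r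
    · subst h
      rw [treePath, if_pos hr]
      exact ⟨[v], .nil v, by simp, by simp, by simp⟩
    · obtain ⟨hadj, hd, hp, hq⟩ := hT v h
      obtain ⟨vs, hvs, hnd, hlast, hdist⟩ := ih (T v).2.2 (by omega)
      rw [treePath, if_neg hadj.ne']
      refine ⟨v :: vs, .cons v _ _ _ _ _ hadj hp hq hvs, ?_, ?_, ?_⟩
      · refine List.nodup_cons.2 ⟨fun hv => ?_, hnd⟩
        exact absurd (hdist v hv) (by omega)
      · simp [List.getLast?_cons, hlast]
      · intro w hw
        rcases List.mem_cons.1 hw with rfl | hw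
        · exact le_rfl
        · exact (hdist w hw).trans hd.le

theorem dist_le (PG : PortGraph) (v u : Fin PG.n) : PG.G.dist v u ≤ PG.n := by
  obtain ⟨w, hw, hl⟩ := PG.conn.exists_path_of_dist v u
  have := hw.length_lt
  simp only [Fintype.card_fin] at this
  omega

/-- For graphs with `n` nodes, tree advice allows leader election. -/
theorem exists_election_of_treeAdvice : ∃ F : (Σ n : {n : ℕ // 3 ≤ n}, TreeAdvice n) →
    AugView → List ℕ, ∀ PG : PortGraph, PG.Feasible → ∃ t : TreeAdvice PG.n,
      PG.IsLeaderElection fun v =>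
        F ⟨⟨PG.n, PG.three_le⟩, t⟩ (PG.augView PG.electionIndex v) := by
  classical
  obtain ⟨g, hg⟩ := exists_view_of_rootedMatrix
  choose H hH using fun n : {n : ℕ // 3 ≤ n} =>
    exists_separating_family n.2 fun d : RootedMatrix n => g ⟨n, d⟩
  refine ⟨fun x B => if h : ∃ i, (x.2.2 i).1 = H x.1 x.2.1 B then
    treePath (fun i => (x.2.2 i).2) x.1 h.choose else [], fun PG hPG => ?_⟩
  have hinj : Function.Injective (PG.augView PG.electionIndex) := Nat.sInf_mem hPG
  obtain ⟨a, ha⟩ := hH ⟨PG.n, PG.three_le⟩ (PG.augView PG.electionIndex) hinj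
    fun v => ⟨(v, PG.portMatrix), hg PG v⟩
  obtain ⟨T, hr, hT⟩ := PG.exists_treeTable ⟨0, by have := PG.three_le; omega⟩
  refine ⟨(a, fun v => (H ⟨PG.n, PG.three_le⟩ a (PG.augView PG.electionIndex v), T v)),
    ⟨0, by have := PG.three_le; omega⟩, fun v => ?_⟩
  obtain ⟨vs, h₁, h₂, h₃, -⟩ := PG.treePath_spec hr hT PG.n v (PG.dist_le _ _)
  refine ⟨vs, ?_, h₂, h₃⟩
  have hex : ∃ i, H ⟨PG.n, PG.three_le⟩ a (PG.augView PG.electionIndex i) =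
    H ⟨PG.n, PG.three_le⟩ a (PG.augView PG.electionIndex v) := ⟨v, rfl⟩
  have hv : hex.choose = v := ha hex.choose_spec
  beta_reduce
  rw [dif_pos hex, hv]
  exact h₁

end PortGraph

/-- Tree advice for all `n` can be encoded injectively in bits, with `O(n log n)` bits. -/
theorem exists_treeAdvice_encoding :
    ∃ enc : (Σ n : {n : ℕ // 3 ≤ n}, TreeAdvice n) → List Bool, Function.Injective enc ∧
      ∀ x, (enc x).length = 11 * x.1 * (Nat.log 2 x.1 + 1) := by
  have h : ∀ n : {n : ℕ // 3 ≤ n}, Nonempty (TreeAdvice n ↪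
      List.Vector Bool (11 * n * (Nat.log 2 n + 1))) := by
    rintro ⟨n, hn⟩
    apply Function.Embedding.nonempty_of_card_le
    simp only [TreeAdvice, Fintype.card_prod, Fintype.card_pi, Fintype.card_fin,
      Finset.prod_const, Finset.card_univ, card_vector, Fintype.card_bool]
    calc n ^ 6 * (n ^ 6 * (n * (n * n))) ^ n = n ^ (6 + 9 * n) := by ring
      _ ≤ n ^ (11 * n) := Nat.pow_le_pow_right (by omega) (by omega)
      _ ≤ (2 ^ (Nat.log 2 n + 1)) ^ (11 * n) :=
        Nat.pow_le_pow_left (Nat.lt_pow_succ_log_self (by norm_num) n).le _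
      _ = 2 ^ (11 * n * (Nat.log 2 n + 1)) := by rw [← pow_mul, mul_comm]
  refine ⟨fun x => ((h x.1).some x.2).toList, ?_, fun x => by simp⟩
  rintro ⟨⟨n, hn⟩, t⟩ ⟨⟨m, hm⟩, t'⟩ he
  have hl := congrArg List.length he
  simp only [List.Vector.toList_length] at hl
  have hmono : StrictMono fun n : ℕ => 11 * n * (Nat.log 2 n + 1) := by
    intro a b hab
    exact Nat.mul_lt_mul_of_lt_of_le (by omega)
      (Nat.succ_le_succ (Nat.log_mono_right hab.le)) (Nat.succ_pos _)
  obtain rfl : n = m := hmono.injective hl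
  obtain rfl : t = t' := (h ⟨n, hn⟩).some.injective (List.Vector.toList_injective he)
  rfl

/-- Advice of size `O(n log n)` suffices to perform leader election in time equal to the
election index: there are an oracle `A` and a function `f` such that for every feasible
graph `G`, `|A(G)| ≤ C · n · log n` and `v ↦ f (A(G), B^φ(v))` elects a leader. -/
theorem advice_upper_bound_min_time :
    ∃ (C : ℝ) (A : PortGraph → List Bool)
      (f : List Bool → PortGraph.AugView → List ℕ), 0 < C ∧
      ∀ PG : PortGraph, PG.Feasible →
        (((A PG).length : ℝ) ≤ C * (PG.n : ℝ) * Real.logb 2 (PG.n : ℝ)) ∧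
        PG.IsLeaderElection (fun v => f (A PG) (PG.augView PG.electionIndex v)) := by
  obtain ⟨F, hF⟩ := PortGraph.exists_election_of_treeAdvice
  obtain ⟨enc, henc, hlen⟩ := exists_treeAdvice_encoding
  have (PG : PortGraph) : Nonempty (TreeAdvice PG.n) := by
    have : NeZero PG.n := ⟨by have := PG.three_le; omega⟩
    infer_instance
  choose! t ht using hF
  refine ⟨22, fun PG => enc ⟨⟨PG.n, PG.three_le⟩, t PG⟩, Function.extend enc F fun _ _ => [],
    by norm_num, fun PG hPG => ⟨?_, ?_⟩⟩
  · have hn : (3 : ℝ) ≤ PG.n := by exact_mod_cast PG.three_le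
    have h1 : (Nat.log 2 PG.n : ℝ) ≤ Real.logb 2 PG.n := by
      exact_mod_cast Real.natLog_le_logb PG.n 2
    have h2 : 1 ≤ Real.logb 2 (PG.n : ℝ) := by
      rw [Real.le_logb_iff_rpow_le (by norm_num) (by linarith), Real.rpow_one]
      linarith
    rw [hlen]
    push_cast
    nlinarith
  · simp only [henc.extend_apply]
    exact ht PG hPG

end Election
end

section
/- There is a constant c > 0 with the following property. Let A be an oracle assigning a binary advice string to every feasible port-numbered graph, and let f be a function such that for every feasible port-numbered graph G with election index 1, the assignment v ↦ f(A(G), B^1(v)) is a leader election output for G. Then there exist infinitely many integers n for which some n-node feasible port-numbered graph G with election index 1 satisfies |A(G)| ≥ c·n·log log n. That is, leader election in time 1 in graphs of election index 1 requires advice of size Ω(n log log n). -/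
namespace Election

namespace PortGraph

theorem nbr_eq (PG : PortGraph) {v u : Fin PG.n} {p : ℕ} (h : PG.G.Adj v u)
    (hp : PG.portNum v u = p) : PG.nbr v p = u := by
  have hex : ∃ u : Fin PG.n, PG.G.Adj v u ∧ PG.portNum v u = p := ⟨u, h, hp⟩
  rw [nbr, dif_pos hex]
  exact PG.port_inj v _ _ hex.choose_spec.1 h (hex.choose_spec.2.trans hp.symm)

theorem augView_one_eq_iff (PG PG' : PortGraph) (v : Fin PG.n) (v' : Fin PG'.n) :
    PG.augView 1 v = PG'.augView 1 v' ↔ PG.degree v = PG'.degree v' ∧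
      ∀ p < PG.degree v, PG.portNum (PG.nbr v p) v = PG'.portNum (PG'.nbr v' p) v' ∧
        PG.degree (PG.nbr v p) = PG'.degree (PG'.nbr v' p) := by
  simp only [augView, AugView.node.injEq]
  constructor
  · intro h
    have hlen : PG.degree v = PG'.degree v' := by simpa using congrArg List.length h
    refine ⟨hlen, fun p hp => ?_⟩
    rw [← hlen] at h
    simpa using List.map_inj_left.1 h p (List.mem_range.2 hp)
  · rintro ⟨hlen, h⟩
    rw [← hlen]
    exact List.map_inj_left.2 fun p hp => by simpa using h p (List.mem_range.1 hp)

end PortGraph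

namespace CliqueCluster

/-- The nodes: for each label `t` a clique consisting of a root `(t, none)` and `x` further nodes
`(t, some i)`; the roots of all the cliques form a clique themselves. -/
abbrev Vert (x : ℕ) : Type := (ZMod x → ZMod x) × Option (ZMod x)

/-- The underlying graph. -/
def graph (x : ℕ) : SimpleGraph (Vert x) where
  Adj v w := (v.1 = w.1 ∧ v.2 ≠ w.2) ∨ (v.1 ≠ w.1 ∧ v.2 = none ∧ w.2 = none)
  symm := ⟨fun v w h => by
    rcases h with ⟨h, h'⟩ | ⟨h, h', h''⟩
    · exact Or.inl ⟨h.symm, h'.symm⟩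
    · exact Or.inr ⟨h.symm, h'', h'⟩⟩
  loopless := ⟨fun v h => by
    rcases h with ⟨_, h⟩ | ⟨h, _⟩
    · exact h rfl
    · exact h rfl⟩

/-- The degrees of the nodes, when there are `k` cliques. -/
def deg (x k : ℕ) : Vert x → ℕ
  | (_, none) => x + k - 1
  | (_, some _) => x

variable {x k : ℕ}

/-- The port numbers, when the cliques are placed at cyclic positions `τ`: the edge from a root to
another root carries the cyclic distance between their positions, and the edges at `(t, some i)` are
shifted cyclically by `t i`. -/
def port (τ : (ZMod x → ZMod x) → ZMod k) : Vert x → Vert x → ℕ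
  | (t, none), (t', none) => x - 1 + (τ t' - τ t).val
  | (_, none), (_, some i) => i.val
  | (t, some i), (_, none) => (t i).val
  | (t, some i), (_, some j) => (t i + (j - i)).val

theorem connected_graph : (graph x).Connected := by
  have key : ∀ v : Vert x, (graph x).Reachable v (0, none) := by
    rintro ⟨t, a⟩
    have h1 : (graph x).Reachable (t, a) (t, none) := by
      by_cases ha : a = none
      · rw [ha]
      · exact SimpleGraph.Adj.reachable (Or.inl ⟨rfl, ha⟩)
    refine h1.trans ?_
    by_cases ht : t = 0
    · rw [ht]
    · exact SimpleGraph.Adj.reachable (Or.inr ⟨ht, rfl, rfl⟩)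
  exact ⟨fun v w => (key v).trans (key w).symm⟩

theorem val_sub_pos {τ : (ZMod x → ZMod x) ≃ ZMod k} {t t' : ZMod x → ZMod x} (h : t ≠ t') :
    0 < (τ t' - τ t).val := by
  rw [Nat.pos_iff_ne_zero, Ne, ZMod.val_eq_zero, sub_eq_zero]
  exact fun h' => h (τ.injective h').symm

section

variable [NeZero x] [NeZero k]

theorem port_lt_deg (τ : (ZMod x → ZMod x) ≃ ZMod k) {v w : Vert x} (h : (graph x).Adj v w) :
    port τ v w < deg x k v := by
  have hx := NeZero.pos x
  have hk := NeZero.pos k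
  rcases v with ⟨t, _ | i⟩ <;> rcases w with ⟨t', _ | j⟩ <;> simp only [port, deg]
  · have := ZMod.val_lt (τ t' - τ t)
    omega
  · have := ZMod.val_lt j
    omega
  · exact ZMod.val_lt _
  · exact ZMod.val_lt _

theorem port_injective (τ : (ZMod x → ZMod x) ≃ ZMod k) {v u w : Vert x}
    (hu : (graph x).Adj v u) (hw : (graph x).Adj v w) (h : port τ v u = port τ v w) : u = w := by
  have hx := NeZero.pos x
  rcases v with ⟨t, _ | i⟩ <;> rcases u with ⟨t₁, _ | j⟩ <;> rcases w with ⟨t₂, _ | l⟩ <;>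
    simp [graph] at hu hw <;> simp only [port] at h
  · have := ZMod.val_injective k (Nat.add_left_cancel h)
    simpa using this
  · have := val_sub_pos (τ := τ) hu
    have := ZMod.val_lt l
    omega
  · have := val_sub_pos (τ := τ) hw
    have := ZMod.val_lt j
    omega
  · have := ZMod.val_injective x h
    rw [← hu, ← hw, this]
  · rw [← hu, ← hw]
  · have := ZMod.val_injective x h
    exact absurd (by linear_combination this) hw.2
  · have := ZMod.val_injective x h
    exact absurd (by linear_combination -this) hu.2
  · have := ZMod.val_injective x h
    have hj : j = l := by linear_combination this
    rw [← hu.1, ← hw.1, hj]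

theorem exists_port_eq (τ : (ZMod x → ZMod x) ≃ ZMod k) (v : Vert x) {p : ℕ}
    (hp : p < deg x k v) : ∃ w, (graph x).Adj v w ∧ port τ v w = p := by
  have hx := NeZero.pos x
  have hk := NeZero.pos k
  rcases v with ⟨t, _ | i⟩ <;> simp only [deg] at hp
  · by_cases hpx : p < x
    · exact ⟨(t, some (p : ZMod x)), Or.inl ⟨rfl, by simp⟩, ZMod.val_natCast_of_lt hpx⟩
    · have hval : ((p - (x - 1) : ℕ) : ZMod k).val = p - (x - 1) :=
        ZMod.val_natCast_of_lt (by omega)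
      refine ⟨(τ.symm (τ t + (p - (x - 1) : ℕ)), none), Or.inr ⟨fun h => ?_, rfl, rfl⟩, ?_⟩
      · have h' := congrArg τ h
        simp only [Equiv.apply_symm_apply, left_eq_add] at h'
        rw [h', ZMod.val_zero] at hval
        omega
      · simp only [port, Equiv.apply_symm_apply, add_sub_cancel_left, hval]
        omega
  · have hval : (p : ZMod x).val = p := ZMod.val_natCast_of_lt hp
    by_cases h : (p : ZMod x) = t i
    · exact ⟨(t, none), Or.inl ⟨rfl, by simp⟩, by rw [port, ← h, hval]⟩
    · refine ⟨(t, some (i + ((p : ZMod x) - t i))), Or.inl ⟨rfl, fun h' => h ?_⟩, ?_⟩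
      · have := Option.some.inj h'
        linear_combination -this
      · simp only [port]
        rw [← hval]
        congr 1
        simp

theorem card_adj (τ : (ZMod x → ZMod x) ≃ ZMod k) (v : Vert x) :
    Nat.card {w // (graph x).Adj v w} = deg x k v := by
  rw [← Nat.card_fin (deg x k v)]
  refine Nat.card_congr (Equiv.ofBijective
    (fun w => (⟨port τ v w.1, port_lt_deg τ w.2⟩ : Fin (deg x k v))) ⟨fun u w h => ?_, fun p => ?_⟩)
  · exact Subtype.ext (port_injective τ u.2 w.2 (Fin.mk.inj h))
  · obtain ⟨w, hw, hp⟩ := exists_port_eq τ v p.2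
    exact ⟨⟨w, hw⟩, Fin.ext hp⟩

/-- The numbering of the nodes. -/
noncomputable def num (x : ℕ) [NeZero x] : Vert x ≃ Fin (Fintype.card (Vert x)) :=
  Fintype.equivFin _

theorem card_vert : Fintype.card (Vert x) = x ^ x * (x + 1) := by
  simp [ZMod.card]

theorem card_comap_adj (τ : (ZMod x → ZMod x) ≃ ZMod k) (v : Fin (Fintype.card (Vert x))) :
    Nat.card {w // ((graph x).comap (num x).symm).Adj v w} = deg x k ((num x).symm v) := by
  rw [← card_adj τ]
  exact Nat.card_congr ((num x).symm.subtypeEquiv fun _ => Iff.rfl)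

/-- The port-numbered graph in which the cliques are placed at cyclic positions `τ`. -/
noncomputable def portGraph (hx : 2 ≤ x) (τ : (ZMod x → ZMod x) ≃ ZMod k) : PortGraph where
  n := Fintype.card (Vert x)
  three_le := by
    rw [card_vert]
    have := Nat.one_le_pow x x (by omega)
    nlinarith
  G := (graph x).comap (num x).symm
  conn := (SimpleGraph.Iso.comap (num x).symm (graph x)).connected_iff.2 connected_graph
  portNum v w := port τ ((num x).symm v) ((num x).symm w)
  port_lt v u h := by
    rw [card_comap_adj τ]
    exact port_lt_deg τ h
  port_inj v u w hu hw h := (num x).symm.injective (port_injective τ hu hw h)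

/-- The node of `portGraph` with a given name. -/
noncomputable def node (hx : 2 ≤ x) (τ : (ZMod x → ZMod x) ≃ ZMod k) (v : Vert x) :
    Fin (portGraph hx τ).n :=
  num x v

theorem exists_node (hx : 2 ≤ x) (τ : (ZMod x → ZMod x) ≃ ZMod k) (w : Fin (portGraph hx τ).n) :
    ∃ v, node hx τ v = w :=
  ⟨(num x).symm w, (num x).apply_symm_apply w⟩

theorem adj_node (hx : 2 ≤ x) (τ : (ZMod x → ZMod x) ≃ ZMod k) (v w : Vert x) :
    (portGraph hx τ).G.Adj (node hx τ v) (node hx τ w) ↔ (graph x).Adj v w := by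
  simp [portGraph, node]

theorem portNum_node (hx : 2 ≤ x) (τ : (ZMod x → ZMod x) ≃ ZMod k) (v w : Vert x) :
    (portGraph hx τ).portNum (node hx τ v) (node hx τ w) = port τ v w := by
  simp [portGraph, node]

theorem degree_node (hx : 2 ≤ x) (τ : (ZMod x → ZMod x) ≃ ZMod k) (v : Vert x) :
    (portGraph hx τ).degree (node hx τ v) = deg x k v := by
  have := card_comap_adj τ (num x v)
  rw [Equiv.symm_apply_apply] at this
  exact this

theorem nbr_node (hx : 2 ≤ x) (τ : (ZMod x → ZMod x) ≃ ZMod k) {v w : Vert x}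
    (h : (graph x).Adj v w) :
    (portGraph hx τ).nbr (node hx τ v) (port τ v w) = node hx τ w :=
  (portGraph hx τ).nbr_eq ((adj_node hx τ v w).2 h) (portNum_node hx τ v w)

theorem augView_one_node_eq_iff (hx : 2 ≤ x) (τ τ' : (ZMod x → ZMod x) ≃ ZMod k) (v v' : Vert x) :
    (portGraph hx τ).augView 1 (node hx τ v) = (portGraph hx τ').augView 1 (node hx τ' v') ↔
      deg x k v = deg x k v' ∧ ∀ w w', (graph x).Adj v w → (graph x).Adj v' w' →
        port τ v w = port τ' v' w' → port τ w v = port τ' w' v' ∧ deg x k w = deg x k w' := by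
  rw [PortGraph.augView_one_eq_iff, degree_node, degree_node]
  refine and_congr_right fun hd => ⟨fun h w w' hw hw' hp => ?_, fun h p hp => ?_⟩
  · have := h _ (port_lt_deg τ hw)
    rw [nbr_node hx τ hw, hp, nbr_node hx τ' hw'] at this
    simpa only [portNum_node, degree_node] using this
  · obtain ⟨w, hw, hpw⟩ := exists_port_eq τ v hp
    obtain ⟨w', hw', hpw'⟩ := exists_port_eq τ' v' (hd ▸ hp)
    have := h w w' hw hw' (hpw.trans hpw'.symm)
    have e1 := nbr_node hx τ hw
    have e2 := nbr_node hx τ' hw'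
    rw [hpw] at e1
    rw [hpw'] at e2
    rw [e1, e2]
    simpa only [portNum_node, degree_node] using this

/-- The view of a root does not depend on the positions of the cliques. -/
theorem augView_one_root (hx : 2 ≤ x) (τ τ' : (ZMod x → ZMod x) ≃ ZMod k) (t : ZMod x → ZMod x) :
    (portGraph hx τ).augView 1 (node hx τ (t, none)) =
      (portGraph hx τ').augView 1 (node hx τ' (t, none)) := by
  rw [augView_one_node_eq_iff]
  refine ⟨rfl, ?_⟩
  rintro ⟨t₁, _ | j⟩ ⟨t₂, _ | l⟩ h₁ h₂ h <;> simp [graph] at h₁ h₂ <;>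
    simp only [port, deg, and_true] at h ⊢
  · have := ZMod.val_injective k (Nat.add_left_cancel h)
    rw [← neg_sub, this, neg_sub]
  · have := val_sub_pos (τ := τ) h₁
    have := ZMod.val_lt l
    omega
  · have := val_sub_pos (τ := τ') h₂
    have := ZMod.val_lt j
    omega
  · rw [ZMod.val_injective x h, ← h₁, ← h₂]

theorem injective_augView_one (hx : 2 ≤ x) (hk : 2 ≤ k) (τ : (ZMod x → ZMod x) ≃ ZMod k) :
    Function.Injective ((portGraph hx τ).augView 1) := by
  intro a b hab
  obtain ⟨v, rfl⟩ := exists_node hx τ a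
  obtain ⟨w, rfl⟩ := exists_node hx τ b
  congr 1
  rw [augView_one_node_eq_iff] at hab
  obtain ⟨hd, h⟩ := hab
  rcases v with ⟨t, _ | i⟩ <;> rcases w with ⟨t', _ | j⟩ <;> simp only [deg] at hd
  · congr 1
    funext i
    have := (h (t, some i) (t', some i) (Or.inl ⟨rfl, by simp⟩) (Or.inl ⟨rfl, by simp⟩) rfl).1
    exact ZMod.val_injective x this
  · omega
  · omega
  · obtain ⟨u, hu, hpu⟩ := exists_port_eq (k := k) τ (t', some j) (p := (t i).val)
      (ZMod.val_lt (t i))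
    have h1 := h (t, none) u (Or.inl ⟨rfl, by simp⟩) hu hpu.symm
    rcases u with ⟨t'', _ | l⟩
    swap
    · simp only [deg] at h1
      omega
    simp [graph] at hu
    subst hu
    have hij : i = j := ZMod.val_injective x h1.1
    subst hij
    have hti : t' i = t i := ZMod.val_injective x hpu
    congr 1
    funext l
    by_cases hl : i = l
    · rw [← hl, hti]
    · have := (h (t, some l) (t', some l) (Or.inl ⟨rfl, by simpa using hl⟩)
        (Or.inl ⟨rfl, by simpa using hl⟩) (by simp only [port, hti])).1
      exact add_right_cancel (ZMod.val_injective x this)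

theorem not_injective_augView_zero (hx : 2 ≤ x) (τ : (ZMod x → ZMod x) ≃ ZMod k) :
    ¬ Function.Injective ((portGraph hx τ).augView 0) := by
  intro h
  have : Fact (1 < x) := ⟨hx⟩
  have h01 : node hx τ (0, some 0) = node hx τ (0, some 1) :=
    h (by simp only [PortGraph.augView, degree_node, deg])
  simpa using (num x).injective h01

theorem feasible (hx : 2 ≤ x) (hk : 2 ≤ k) (τ : (ZMod x → ZMod x) ≃ ZMod k) :
    (portGraph hx τ).Feasible :=
  ⟨1, injective_augView_one hx hk τ⟩

theorem electionIndex_eq_one (hx : 2 ≤ x) (hk : 2 ≤ k) (τ : (ZMod x → ZMod x) ≃ ZMod k) :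
    (portGraph hx τ).electionIndex = 1 := by
  have hle : (portGraph hx τ).electionIndex ≤ 1 := Nat.sInf_le (injective_augView_one hx hk τ)
  have hmem : Function.Injective ((portGraph hx τ).augView (portGraph hx τ).electionIndex) :=
    Nat.sInf_mem (s := {ℓ | Function.Injective ((portGraph hx τ).augView ℓ)}) (feasible hx hk τ)
  have hne : (portGraph hx τ).electionIndex ≠ 0 := fun h0 =>
    not_injective_augView_zero hx τ (h0 ▸ hmem)
  omega

/-- The cyclic displacement caused by following a sequence of port numbers. -/
def disp (x k : ℕ) : List ℕ → ZMod k
  | p :: _ :: s => (if x ≤ p then ((p - (x - 1) : ℕ) : ZMod k) else 0) + disp x k s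
  | _ => 0

theorem pos_last (hx : 2 ≤ x) (τ : (ZMod x → ZMod x) ≃ ZMod k) {v : Fin (portGraph hx τ).n}
    {s : List ℕ} {vs : List (Fin (portGraph hx τ).n)} (h : (portGraph hx τ).IsPath v s vs)
    {w : Fin (portGraph hx τ).n} (hw : vs.getLast? = some w) :
    τ ((num x).symm w).1 = τ ((num x).symm v).1 + disp x k s := by
  induction h with
  | nil v =>
    obtain rfl : v = w := by simpa using hw
    simp [disp]
  | cons v u p q rest vs hadj hp hq htail ih =>
    have hlast : vs.getLast? = some w := by
      cases htail <;> simpa using hw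
    rw [ih hlast, disp, ← add_assoc]
    congr 1
    obtain ⟨v, rfl⟩ := exists_node hx τ v
    obtain ⟨u, rfl⟩ := exists_node hx τ u
    rw [adj_node] at hadj
    rw [portNum_node] at hp
    subst hp
    simp only [node, Equiv.symm_apply_apply]
    rcases v with ⟨t, _ | i⟩ <;> rcases u with ⟨t', _ | j⟩ <;> simp [graph] at hadj
    · have := val_sub_pos (τ := τ) hadj
      rw [if_pos (by simp only [port]; omega), port, Nat.add_sub_cancel_left,
        ZMod.natCast_zmod_val]
      ring
    · rw [if_neg (by simpa only [port, not_le] using ZMod.val_lt j), hadj, add_zero]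
    · rw [if_neg (by simpa only [port, not_le] using ZMod.val_lt (t i)), hadj, add_zero]
    · rw [if_neg (by simpa only [port, not_le] using ZMod.val_lt (t i + (j - i))), hadj.1, add_zero]

/-- The advice and the position of one clique determine the positions of all the cliques. -/
theorem injective_advice (hx : 2 ≤ x) (A : PortGraph → List Bool)
    (f : List Bool → PortGraph.AugView → List ℕ)
    (h : ∀ τ : (ZMod x → ZMod x) ≃ ZMod k, (portGraph hx τ).IsLeaderElection
      (fun v => f (A (portGraph hx τ)) ((portGraph hx τ).augView 1 v))) :
    Function.Injective
      fun τ : (ZMod x → ZMod x) ≃ ZMod k => (A (portGraph hx τ), τ 0) := by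
  intro τ τ' hττ
  obtain ⟨hA, h0⟩ := Prod.mk.inj hττ
  have key : ∀ σ : (ZMod x → ZMod x) ≃ ZMod k, ∃ l, ∀ t, l = σ t + disp x k
      (f (A (portGraph hx σ)) ((portGraph hx σ).augView 1 (node hx σ (t, none)))) := by
    intro σ
    obtain ⟨l, hl⟩ := h σ
    refine ⟨σ ((num x).symm l).1, fun t => ?_⟩
    obtain ⟨vs, hp, -, hlast⟩ := hl (node hx σ (t, none))
    have := pos_last hx σ hp hlast
    simpa only [node, Equiv.symm_apply_apply] using this
  obtain ⟨l, hl⟩ := key τ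
  obtain ⟨l', hl'⟩ := key τ'
  ext1 t
  have e0 := hl 0
  have e0' := hl' 0
  have e := hl t
  have e' := hl' t
  rw [augView_one_root hx τ τ', hA] at e0 e
  linear_combination e' - e + e0 - e0' + h0

end

end CliqueCluster

/-- The number of binary strings of length at most `L` is at most `4 ^ L`. -/
theorem card_le_of_injective_list {α : Type*} [Fintype α] {L : ℕ} (g : α → List Bool)
    {m : ℕ} (r : α → Fin m) (hg : Function.Injective fun a => (g a, r a))
    (hL : ∀ a, (g a).length ≤ L) : Fintype.card α ≤ 4 ^ L * m := by
  have hinj : Function.Injective fun a => (((⟨(g a).length, Nat.lt_succ_of_le (hL a)⟩ : Fin (L + 1)),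
      fun i : Fin L => (g a).getD i false), r a) := by
    intro a b hab
    simp only [Prod.mk.injEq, Fin.mk.injEq] at hab
    obtain ⟨⟨hlen, hget⟩, hr⟩ := hab
    refine hg (Prod.ext (List.ext_getElem hlen fun i hi hi' => ?_) hr)
    have := congrFun hget ⟨i, hi.trans_le (hL a)⟩
    simpa [hi, hi'] using this
  have hcard := Fintype.card_le_of_injective _ hinj
  simp only [Fintype.card_prod, Fintype.card_fin, Fintype.card_fun, Fintype.card_bool] at hcard
  refine hcard.trans (Nat.mul_le_mul_right m ?_)
  calc (L + 1) * 2 ^ L ≤ 2 ^ L * 2 ^ L := Nat.mul_le_mul_right _ Nat.lt_two_pow_self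
    _ = 4 ^ L := by rw [← mul_pow]; norm_num

theorem le_of_factorial_two_pow_le {b L : ℕ} (hb : 3 ≤ b)
    (h : (2 ^ b).factorial ≤ 4 ^ L * 2 ^ b) : b * 2 ^ b ≤ 16 * L := by
  obtain ⟨c, rfl⟩ : ∃ c, b = c + 1 := ⟨b - 1, by omega⟩
  have h1 : 2 ^ (c * 2 ^ c) ≤ (2 ^ (c + 1)).factorial := by
    calc 2 ^ (c * 2 ^ c) = (2 ^ c) ^ 2 ^ c := by rw [pow_mul]
      _ ≤ (2 ^ c + 1) ^ 2 ^ c := Nat.pow_le_pow_left (Nat.le_succ _) _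
      _ ≤ (2 ^ c).factorial * (2 ^ c + 1) ^ 2 ^ c :=
        Nat.le_mul_of_pos_left _ (Nat.factorial_pos _)
      _ ≤ (2 ^ c + 2 ^ c).factorial := Nat.factorial_mul_pow_le_factorial
      _ = _ := by rw [← mul_two, ← pow_succ]
  have h2 : 2 ^ (c * 2 ^ c) ≤ 2 ^ (2 * L + (c + 1)) := by
    rw [pow_add, pow_mul 2 2 L]
    exact h1.trans h
  have h3 := (Nat.pow_le_pow_iff_right (by norm_num)).1 h2
  have h4 : 4 ≤ 2 ^ c := by
    calc 4 = 2 ^ 2 := rfl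
      _ ≤ 2 ^ c := Nat.pow_le_pow_right (by norm_num) (by omega)
  rw [pow_succ]
  nlinarith

theorem loglog_le {a : ℕ} (ha : 1 ≤ a) :
    Real.logb 2 (Real.logb 2 (((2 ^ a) ^ 2 ^ a * (2 ^ a + 1) : ℕ) : ℝ)) ≤ 3 * a := by
  have hlt : a + 1 ≤ 2 ^ a := Nat.lt_two_pow_self
  have hexp : a * 2 ^ a + (a + 1) ≤ 2 ^ (3 * a) := by
    have : (2 ^ a) ^ 2 ≤ (2 ^ a) ^ 3 := Nat.pow_le_pow_right (by positivity) (by norm_num)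
    rw [mul_comm 3 a, pow_mul]
    nlinarith
  have hn : (2 ^ a) ^ 2 ^ a * (2 ^ a + 1) ≤ 2 ^ 2 ^ (3 * a) := by
    calc (2 ^ a) ^ 2 ^ a * (2 ^ a + 1) ≤ 2 ^ (a * 2 ^ a) * 2 ^ (a + 1) := by
          rw [← pow_mul, pow_succ 2 a]
          gcongr
          omega
      _ = 2 ^ (a * 2 ^ a + (a + 1)) := (pow_add _ _ _).symm
      _ ≤ _ := Nat.pow_le_pow_right (by norm_num) hexp
  have hn2 : 2 ≤ (2 ^ a) ^ 2 ^ a * (2 ^ a + 1) := by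
    have := Nat.one_le_pow (2 ^ a) (2 ^ a) (by positivity)
    nlinarith
  have hl : Real.logb 2 (((2 ^ a) ^ 2 ^ a * (2 ^ a + 1) : ℕ) : ℝ) ≤ (2 : ℝ) ^ (3 * a) := by
    rw [Real.logb_le_iff_le_rpow (by norm_num) (by positivity)]
    have : ((2 : ℝ) ^ ((2 : ℝ) ^ (3 * a))) = ((2 ^ 2 ^ (3 * a) : ℕ) : ℝ) := by
      rw [← Real.rpow_natCast 2 (3 * a)]
      push_cast
      rw [← Real.rpow_natCast 2 (2 ^ (3 * a)), Nat.cast_pow, ← Real.rpow_natCast _ (3 * a)]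
      norm_num
    rw [this]
    exact_mod_cast hn
  have hpos : 0 < Real.logb 2 (((2 ^ a) ^ 2 ^ a * (2 ^ a + 1) : ℕ) : ℝ) :=
    Real.logb_pos (by norm_num) (by exact_mod_cast hn2)
  rw [Real.logb_le_iff_le_rpow (by norm_num) hpos]
  refine hl.trans (le_of_eq ?_)
  rw [← Real.rpow_natCast]
  push_cast
  rfl

/-- Leader election in time 1 in graphs of election index 1 requires advice of size
`Ω(n log log n)`. -/
theorem advice_lower_bound_index_one :
    ∃ c : ℝ, 0 < c ∧
      ∀ (A : PortGraph → List Bool) (f : List Bool → PortGraph.AugView → List ℕ),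
        (∀ PG : PortGraph, PG.Feasible → PG.electionIndex = 1 →
          PG.IsLeaderElection (fun v => f (A PG) (PG.augView 1 v))) →
        ∀ N : ℕ, ∃ n : ℕ, N ≤ n ∧ ∃ PG : PortGraph, PG.n = n ∧ PG.Feasible ∧
          PG.electionIndex = 1 ∧
          c * (n : ℝ) * Real.logb 2 (Real.logb 2 (n : ℝ)) ≤ ((A PG).length : ℝ) := by
  refine ⟨1 / 192, by norm_num, fun A f hAf N => ?_⟩
  set a := N + 2 with ha
  set x := 2 ^ a with hxa
  have hx4 : 4 ≤ x := by
    calc 4 = 2 ^ 2 := rfl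
      _ ≤ 2 ^ a := Nat.pow_le_pow_right (by norm_num) (by omega)
  have hx : 2 ≤ x := by omega
  have hxk : x ≤ x ^ x := Nat.le_self_pow (by omega) x
  have hk : 2 ≤ x ^ x := hx.trans hxk
  have : NeZero x := ⟨by omega⟩
  have : NeZero (x ^ x) := ⟨by omega⟩
  refine ⟨x ^ x * (x + 1), ?_, ?_⟩
  · have : a < 2 ^ a := Nat.lt_two_pow_self
    nlinarith
  by_contra! hcon
  set B : ℝ := 1 / 192 * ((x ^ x * (x + 1) : ℕ) : ℝ) *
    Real.logb 2 (Real.logb 2 ((x ^ x * (x + 1) : ℕ) : ℝ)) with hB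
  have hlen : ∀ τ : (ZMod x → ZMod x) ≃ ZMod (x ^ x),
      ((A (CliqueCluster.portGraph hx τ)).length : ℝ) < B := fun τ =>
    hcon _ CliqueCluster.card_vert (CliqueCluster.feasible hx hk τ)
      (CliqueCluster.electionIndex_eq_one hx hk τ)
  have hinj := CliqueCluster.injective_advice (k := x ^ x) hx A f fun τ =>
    hAf _ (CliqueCluster.feasible hx hk τ) (CliqueCluster.electionIndex_eq_one hx hk τ)
  have hcardT : Fintype.card (ZMod x → ZMod x) = x ^ x := by simp [ZMod.card]
  have e : (ZMod x → ZMod x) ≃ ZMod (x ^ x) :=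
    Fintype.equivOfCardEq (by rw [hcardT, ZMod.card])
  have hB0 : 0 ≤ B := (Nat.cast_nonneg _).trans (hlen e).le
  have hcount := card_le_of_injective_list (L := ⌊B⌋₊) (m := x ^ x)
    (fun τ : (ZMod x → ZMod x) ≃ ZMod (x ^ x) => A (CliqueCluster.portGraph hx τ))
    (fun τ => ⟨(τ 0).val, ZMod.val_lt _⟩)
    (fun τ τ' h => hinj (Prod.ext (Prod.mk.inj h).1
      (ZMod.val_injective _ (Fin.mk.inj (Prod.mk.inj h).2))))
    (fun τ => Nat.le_floor (hlen τ).le)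
  rw [Fintype.card_equiv e, hcardT, hxa, ← pow_mul, ← hxa] at hcount
  have hax : 3 ≤ a * x := by nlinarith
  have hL := le_of_factorial_two_pow_le hax hcount
  have hk' : 2 ^ (a * x) = x ^ x := by rw [pow_mul]
  rw [hk'] at hL
  have hL' : ((a : ℝ) * x * (x ^ x : ℕ)) ≤ 16 * B := by
    have h1 : ((a * x * x ^ x : ℕ) : ℝ) ≤ ((16 * ⌊B⌋₊ : ℕ) : ℝ) := by exact_mod_cast hL
    push_cast at h1 ⊢
    linarith [Nat.floor_le hB0]
  have hll : Real.logb 2 (Real.logb 2 ((x ^ x * (x + 1) : ℕ) : ℝ)) ≤ 3 * a :=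
    loglog_le (a := a) (by omega)
  have hBle : B ≤ 1 / 192 * ((x ^ x * (x + 1) : ℕ) : ℝ) * (3 * a) := by
    rw [hB]
    gcongr
  have hxR : (4 : ℝ) ≤ x := by exact_mod_cast hx4
  have hkR : (0 : ℝ) < (x ^ x : ℕ) := by exact_mod_cast (by omega : 0 < x ^ x)
  have haR : (0 : ℝ) < a := by exact_mod_cast (by omega : 0 < a)
  have hpos : 0 < (a : ℝ) * (x ^ x : ℕ) := mul_pos haR hkR
  have hcast : ((x ^ x * (x + 1) : ℕ) : ℝ) = ((x ^ x : ℕ) : ℝ) * (x + 1) := by push_cast; ring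
  rw [hcast] at hBle
  nlinarith

end Election
end
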